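/- arXiv:1204.3197 — 2 statements merged into one kernel-verified Lean document; each statement's English description precedes it below -/
import Mathlib

section
/- Let L ≥ 2 and M ≥ 3(L+1) be integers, let ψ ∈ Ψ_M (M-spaced), and let ζ(L) be the hierarchical weighted word. Then the percolation configuration ω_{ζ(L),ψ} has an infinite open permitted path starting from the origin. -/
open Filter Set MeasureTheory
open scoped ENNReal NNReal

namespace Paper

/-! ### Binary sequences and compatibility -/

/-- Delete the `i`-th entry of a sequence, shifting everything to the right of it
one step to the left. -/
def deleteAt {α : Type*} (ξ : ℕ → α) (i : ℕ) : ℕ → α :=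
  fun j => if j < i then ξ j else ξ (j + 1)

/-- The annihilation operator `Δ_i^0` on binary sequences: delete the `i`-th digit
if it is a zero (`false`), otherwise do nothing. -/
def delta0 (ξ : ℕ → Bool) (i : ℕ) : ℕ → Bool :=
  if ξ i = false then deleteAt ξ i else ξ

/-- The annihilation operator `Δ_i^1` on binary sequences: delete the `i`-th digit
if it is a one (`true`), otherwise do nothing. -/
def delta1 (ξ : ℕ → Bool) (i : ℕ) : ℕ → Bool :=
  if ξ i = true then deleteAt ξ i else ξ

/-- `Reach1 η η'` : `η'` is obtained from `η` by finitely many applications of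
operators `Δ_·^1`. -/
def Reach1 : (ℕ → Bool) → (ℕ → Bool) → Prop :=
  Relation.ReflTransGen fun a b => ∃ i, b = delta1 a i

/-- `Reach0 ξ ξ'` : `ξ'` is obtained from `ξ` by finitely many applications of
operators `Δ_·^0`. -/
def Reach0 : (ℕ → Bool) → (ℕ → Bool) → Prop :=
  Relation.ReflTransGen fun a b => ∃ i, b = delta0 a i

/-- Compatibility of an ordered pair of binary sequences: one can delete ones from `η`
and zeroes from `ξ` so that the resulting sequences converge (in the product topology)
to a common limit. -/
def Compatible (η ξ : ℕ → Bool) : Prop :=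
  ∃ (ηs ξs : ℕ → ℕ → Bool) (l : ℕ → Bool),
    (∀ k, Reach1 η (ηs k)) ∧ (∀ k, Reach0 ξ (ξs k)) ∧
      Tendsto ηs atTop (nhds l) ∧ Tendsto ξs atTop (nhds l)

/-- `μ` is the product Bernoulli measure on `{0,1}^ℕ` with parameter `p`. -/
def IsBernoulliProduct (μ : Measure (ℕ → Bool)) (p : ℝ) : Prop :=
  IsProbabilityMeasure μ ∧
    ∀ (s : Finset ℕ) (b : ℕ → Bool),
      μ {ξ | ∀ i ∈ s, ξ i = b i} = ∏ i ∈ s, ENNReal.ofReal (if b i then p else 1 - p)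

/-- The set `Ξ_∞` of binary sequences with infinitely many ones and infinitely many
zeroes. -/
def Xinf (ξ : ℕ → Bool) : Prop :=
  (∀ n, ∃ m, n ≤ m ∧ ξ m = true) ∧ ∀ n, ∃ m, n ≤ m ∧ ξ m = false

/-- Length of the run of ones of `ξ` starting at position `n` (junk value `0` if the
run is infinite). -/
noncomputable def runLen (ξ : ℕ → Bool) (n : ℕ) : ℕ :=
  letI := Classical.dec (∃ k, ξ (n + k) = false)
  if h : ∃ k, ξ (n + k) = false then Nat.find h else 0

/-- The position in `ξ` at which the `j`-th letter of the weighted word `f ξ` starts. -/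
noncomputable def fpos (ξ : ℕ → Bool) : ℕ → ℕ
  | 0 => 0
  | j + 1 => fpos ξ j + max (runLen ξ (fpos ξ j)) 1

/-- The run-length map `f : Ξ_∞ → Ψ`, replacing each maximal run of ones by a single
letter whose weight is the length of the run (zeroes being kept as letters of
weight `0`). -/
noncomputable def fmap (ξ : ℕ → Bool) : ℕ → ℕ :=
  fun j => runLen ξ (fpos ξ j)

/-! ### Weighted words -/

/-- The set `Ψ` of weighted words: a weight `≥ 1` is always followed by a weight `0`. -/
def Psi (ψ : ℕ → ℕ) : Prop := ∀ i, 1 ≤ ψ i → ψ (i + 1) = 0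

/-- The annihilation operator `Δ_i^0` on weighted words. -/
def pdelta0 (ψ : ℕ → ℕ) (i : ℕ) : ℕ → ℕ :=
  if ψ i ≠ 0 then ψ
  else if i = 0 ∨ ψ (i - 1) = 0 ∨ ψ (i + 1) = 0 then deleteAt ψ i
  else fun j => if j + 1 < i then ψ j else if j + 1 = i then ψ (i - 1) + ψ (i + 1) else ψ (j + 2)

/-- The annihilation operator `Δ_i^1` on weighted words. -/
def pdelta1 (ψ : ℕ → ℕ) (i : ℕ) : ℕ → ℕ :=
  if ψ i = 0 then ψ
  else if ψ i = 1 then deleteAt ψ i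
  else Function.update ψ i (ψ i - 1)

/-- Finitely many applications of operators `Δ_·^1` on weighted words. -/
def PReach1 : (ℕ → ℕ) → (ℕ → ℕ) → Prop :=
  Relation.ReflTransGen fun a b => ∃ i, b = pdelta1 a i

/-- Finitely many applications of operators `Δ_·^0` on weighted words. -/
def PReach0 : (ℕ → ℕ) → (ℕ → ℕ) → Prop :=
  Relation.ReflTransGen fun a b => ∃ i, b = pdelta0 a i

/-- Compatibility of an ordered pair of weighted words. -/
def CompatibleP (ζ ψ : ℕ → ℕ) : Prop :=
  ∃ (ζs ψs : ℕ → ℕ → ℕ) (l : ℕ → ℕ),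
    (∀ k, PReach1 ζ (ζs k)) ∧ (∀ k, PReach0 ψ (ψs k)) ∧
      (∀ k, Psi (ζs k)) ∧ (∀ k, Psi (ψs k)) ∧
      Tendsto ζs atTop (nhds l) ∧ Tendsto ψs atTop (nhds l)

/-! ### The oriented percolation process -/

/-- Oriented edges of the graph `G`: from `u` to `u + (0,1)` and from `u` to `u + (1,1)`. -/
def IsStep (u v : ℕ × ℕ) : Prop :=
  (v.1 = u.1 ∧ v.2 = u.2 + 1) ∨ (v.1 = u.1 + 1 ∧ v.2 = u.2 + 1)

/-- Open vertices of the configuration `ω_{ζ,ψ}`.  (Sequences are `0`-indexed in this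
formalization, so the entry of `ζ` at the paper's position `v₁ ≥ 1` is `ζ (v₁ - 1)`.) -/
def OpenV (ζ ψ : ℕ → ℕ) (v : ℕ × ℕ) : Prop :=
  v = (0, 0) ∨ (1 ≤ v.1 ∧ 1 ≤ v.2 ∧ ψ (v.2 - 1) ≤ ζ (v.1 - 1))

/-- Heavy vertices: `v₂ = 0`, or the row weight `ψ_{v₂}` is positive. -/
def Heavy (ψ : ℕ → ℕ) (v : ℕ × ℕ) : Prop := v.2 = 0 ∨ 1 ≤ ψ (v.2 - 1)

/-- `π 0, π 1, …, π n` is an open oriented path in `ω_{ζ,ψ}`. -/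
def IsOpenPath (ζ ψ : ℕ → ℕ) (π : ℕ → ℕ × ℕ) (n : ℕ) : Prop :=
  (∀ i < n, IsStep (π i) (π (i + 1))) ∧ ∀ i ≤ n, OpenV ζ ψ (π i)

/-- The path `π 0, …, π n` is permitted: any two distinct heavy vertices on it have
different first coordinates. -/
def IsPermitted (ψ : ℕ → ℕ) (π : ℕ → ℕ × ℕ) (n : ℕ) : Prop :=
  ∀ i ≤ n, ∀ j ≤ n, π i ≠ π j → Heavy ψ (π i) → Heavy ψ (π j) → (π i).1 ≠ (π j).1

/-- There is an infinite open permitted oriented path starting from the origin in the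
percolation configuration `ω_{ζ,ψ}`. -/
def InfOpenPermitted (ζ ψ : ℕ → ℕ) : Prop :=
  ∃ π : ℕ → ℕ × ℕ, π 0 = (0, 0) ∧ (∀ n, IsStep (π n) (π (n + 1))) ∧
    (∀ n, OpenV ζ ψ (π n)) ∧
    ∀ i j, π i ≠ π j → Heavy ψ (π i) → Heavy ψ (π j) → (π i).1 ≠ (π j).1

/-- `V_{⟨ζ,ψ⟩}(c)`: vertices in row `c` reachable from the origin by an open permitted
oriented path. -/
def Vset (ζ ψ : ℕ → ℕ) (c : ℕ) : Set (ℕ × ℕ) :=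
  {v | v.2 = c ∧ ∃ (π : ℕ → ℕ × ℕ) (n : ℕ), π 0 = (0, 0) ∧ π n = v ∧
    IsOpenPath ζ ψ π n ∧ IsPermitted ψ π n}

/-- The open oriented cluster of the origin in `ω_{ζ,ψ}`. -/
def ClusterO (ζ ψ : ℕ → ℕ) : Set (ℕ × ℕ) :=
  {v | ∃ (π : ℕ → ℕ × ℕ) (n : ℕ), π 0 = (0, 0) ∧ π n = v ∧ IsOpenPath ζ ψ π n}

/-- The horizontal slab `S_{[a,b]}`. -/
def Slab (a b : ℕ) : Set (ℕ × ℕ) := {v | a ≤ v.2 ∧ v.2 ≤ b}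

/-- The horizontal discrete segment in row `c` with endpoints `a` and `b`. -/
def HSeg (c a b : ℕ) : Set (ℕ × ℕ) := {v | v.2 = c ∧ a ≤ v.1 ∧ v.1 ≤ b}

/-- The shift `θ_m`. -/
def shiftSeq (m : ℕ) (ψ : ℕ → ℕ) : ℕ → ℕ := fun j => ψ (j + m)

/-- The hierarchical weighted word `ζ(L)`: the letter at the paper's position
`j ≥ 1` (Lean index `j - 1`) has weight `k` iff `L^k ∣ j` and `L^{k+1} ∤ j`. -/
noncomputable def zetaL (L : ℕ) : ℕ → ℕ := fun j => sSup {k | L ^ k ∣ j + 1}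

/-- Lean indices at which `ψ` has an entry `≥ k`. -/
def idxSet (ψ : ℕ → ℕ) (k : ℕ) : Set ℕ := {n | k ≤ ψ n}

/-- `i_k(ψ)`: the first (1-based, as in the paper) position at which `ψ` has
an entry `≥ k` (meaningful when `idxSet ψ k` is nonempty). -/
noncomputable def idx (ψ : ℕ → ℕ) (k : ℕ) : ℕ := sInf (idxSet ψ k) + 1

/-- Condition a) of being `M`-spaced. -/
def CondA (M : ℕ) (ψ : ℕ → ℕ) : Prop := ∀ i j : ℕ, i < j → M ^ min (ψ i) (ψ j) ≤ j - i

/-- `ψ ∈ Ψ_M^k` : `ψ` is `M`-spaced up to level `k`. -/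
def SpacedUpTo (M k : ℕ) (ψ : ℕ → ℕ) : Prop :=
  Psi ψ ∧ CondA M ψ ∧ ∀ j, 1 ≤ j → j ≤ k → (idxSet ψ j).Nonempty → M ^ j ≤ idx ψ j

/-- `ψ ∈ Ψ_M` : `ψ` is `M`-spaced. -/
def Spaced (M : ℕ) (ψ : ℕ → ℕ) : Prop :=
  Psi ψ ∧ CondA M ψ ∧ ∀ j, 1 ≤ j → (idxSet ψ j).Nonempty → M ^ j ≤ idx ψ j

/-! ### Discrete Hausdorff dimension (Barlow–Taylor) -/

/-- `ν_α(A, F)` with the normalizing diameter `dF` of `F` given explicitly; the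
infimum is over countable covers of `A ∩ F` by integer intervals `[x, y)`. -/
noncomputable def nuBT (α : ℝ) (A F : Set ℤ) (dF : ℝ) : ℝ≥0∞ :=
  (⨅ (B : ℕ → ℤ × ℤ) (_ : A ∩ F ⊆ ⋃ i, Set.Ico (B i).1 (B i).2),
      ∑' i, ENNReal.ofReal ((((B i).2 - (B i).1 : ℤ)) : ℝ) ^ α) /
    ENNReal.ofReal dF ^ α

/-- The annulus `I_n^{(r)}` (for `n ≥ 1`). -/
noncomputable def ringBT (r n : ℕ) : Set ℤ :=
  if n = 1 then Set.Ico (-(r : ℤ)) (r : ℤ)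
  else Set.Ico (-((r : ℤ) ^ n)) ((r : ℤ) ^ n) \ Set.Ico (-((r : ℤ) ^ (n - 1))) ((r : ℤ) ^ (n - 1))

/-- `m_α^{(r)}(A) = ∑_{n ≥ 1} ν_α(A, I_n^{(r)})`. -/
noncomputable def mBT (r : ℕ) (α : ℝ) (A : Set ℤ) : ℝ≥0∞ :=
  ∑' n : ℕ, nuBT α A (ringBT r (n + 1)) (2 * (r : ℝ) ^ (n + 1))

/-- The discrete (Barlow–Taylor) Hausdorff dimension of `A ⊆ ℤ`. -/
noncomputable def dimBT (r : ℕ) (A : Set ℤ) : ℝ :=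
  sInf {α : ℝ | 0 < α ∧ mBT r α A < ⊤}

/-- The set of zeroes of a binary sequence, viewed inside `ℤ` (at the paper's
positions `1, 2, …`). -/
def zeroSetZ (η : ℕ → Bool) : Set ℤ := {i : ℤ | ∃ n : ℕ, i = (n : ℤ) + 1 ∧ η n = false}

/-! ### The grouping construction -/

/-- A cluster together with its mass. -/
abbrev Clu : Type := Set ℕ × ℕ

/-- The set of (paper, i.e. 1-based) positions of the ones of `ξ`. -/
def Gamma (ξ : ℕ → Bool) : Set ℕ := {n | 1 ≤ n ∧ ξ (n - 1) = true}

/-- The span of a set: the smallest interval containing it. -/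
noncomputable def spanI (C : Set ℕ) : Set ℕ := Set.Icc (sInf C) (sSup C)

/-- Euclidean distance between two sets of integers. -/
noncomputable def cluDist (C D : Set ℕ) : ℕ := sInf {d | ∃ a ∈ C, ∃ b ∈ D, d = Nat.dist a b}

/-- Diameter of a set of integers. -/
noncomputable def sdiam (C : Set ℕ) : ℕ := sSup {d | ∃ a ∈ C, ∃ b ∈ C, d = Nat.dist a b}

/-- `C` lies entirely to the left of `D`. -/
def cluLT (C D : Set ℕ) : Prop := ∀ a ∈ C, ∀ b ∈ D, a < b

/-- `p` and `q` are adjacent clusters of the collection `B` (no cluster of `B` lies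
strictly between them) at distance `< t`. -/
def adjStep (B : Set Clu) (t : ℕ) (p q : Clu) : Prop :=
  p ∈ B ∧ q ∈ B ∧ cluDist p.1 q.1 < t ∧
    ((cluLT p.1 q.1 ∧ ∀ r ∈ B, ¬(cluLT p.1 r.1 ∧ cluLT r.1 q.1)) ∨
      (cluLT q.1 p.1 ∧ ∀ r ∈ B, ¬(cluLT q.1 r.1 ∧ cluLT r.1 p.1)))

/-- The maximal run (within the collection `B`, with gap threshold `t`) containing `p`. -/
def runOf (B : Set Clu) (t : ℕ) (p : Clu) : Set Clu :=
  {q ∈ B | Relation.ReflTransGen (adjStep B t) p q}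

/-- `R` is a maximal run of length `≥ 2` of clusters of `B` with gap threshold `t`. -/
def IsRun (B : Set Clu) (t : ℕ) (R : Set Clu) : Prop :=
  ∃ p ∈ B, R = runOf B t p ∧ ∃ q ∈ R, q ≠ p

/-- The level-`(k+1)` cluster created from a maximal `(k+1)`-run `R`: its point set is
`span(R) ∩ Γ`, and its mass is `∑ m(constituents) - k (n - 1)`. -/
noncomputable def runClu (Γ : Set ℕ) (k : ℕ) (R : Set Clu) : Clu :=
  (spanI (⋃ q ∈ R, q.1) ∩ Γ, (∑ᶠ q ∈ R, q.2) - k * (Nat.card R - 1))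

/-- One step of the grouping construction: from the partition `𝐂_k` to `𝐂_{k+1}`. -/
noncomputable def nextPart (Γ : Set ℕ) (M k : ℕ) (S : Set Clu) : Set Clu :=
  {c | ∃ R, IsRun {q ∈ S | k + 1 ≤ q.2} (M ^ (k + 1)) R ∧ c = runClu Γ k R} ∪
    {c ∈ S | ∀ R, IsRun {q ∈ S | k + 1 ≤ q.2} (M ^ (k + 1)) R →
      Disjoint c.1 (spanI (⋃ q ∈ R, q.1))}

/-- The partition `𝐂_k` of `Γ` into clusters with masses (grouping construction with
spacing parameter `M`). -/
noncomputable def parts (Γ : Set ℕ) (M : ℕ) : ℕ → Set Clu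
  | 0 => {c | ∃ x ∈ Γ, c = ({x}, 1)}
  | k + 1 => nextPart Γ M k (parts Γ M k)

/-- `c` is a cluster of level `ℓ`: it appears in `𝐂_ℓ` and in no earlier partition. -/
def IsLevelCluster (Γ : Set ℕ) (M ℓ : ℕ) (c : Clu) : Prop :=
  c ∈ parts Γ M ℓ ∧ ∀ k < ℓ, c ∉ parts Γ M k

/-- `κ(x) < ∞` : the levels of the clusters containing `x` are bounded. -/
def KappaFinite (Γ : Set ℕ) (M : ℕ) (x : ℕ) : Prop :=
  BddAbove {ℓ | ∃ c : Clu, IsLevelCluster Γ M ℓ c ∧ x ∈ c.1}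

/-- The event `Ξ(p)` on which the grouping construction is well set:
`κ(x) < ∞` for every `x ∈ Γ(ξ)`. -/
def GoodSeq (M : ℕ) (ξ : ℕ → Bool) : Prop := ∀ x ∈ Gamma ξ, KappaFinite (Gamma ξ) M x

/-- The collection `𝐂_∞` of maximal clusters: those that stay in `𝐂_k` forever. -/
def maxClusters (Γ : Set ℕ) (M : ℕ) : Set Clu :=
  {c | ∃ ℓ, ∀ k, ℓ ≤ k → c ∈ parts Γ M k}

/-- The defining condition of `χ(ξ) ≤ k` : every maximal cluster of mass `> k`
is at distance `≥ M^{mass}` from the origin.  (Positions are 1-based, so the distance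
from a cluster to `0` is its smallest element.) -/
def ChiCond (Γ : Set ℕ) (M k : ℕ) : Prop :=
  ∀ c ∈ maxClusters Γ M, k < c.2 → M ^ c.2 ≤ sInf c.1

/-- The maximal cluster containing a given point (junk if there is none). -/
noncomputable def maxCluOf (Γ : Set ℕ) (M : ℕ) (x : ℕ) : Clu :=
  letI := Classical.dec (∃ c : Clu, c ∈ maxClusters Γ M ∧ x ∈ c.1)
  if h : ∃ c : Clu, c ∈ maxClusters Γ M ∧ x ∈ c.1 then h.choose else (∅, 0)

/-- Enumeration of the maximal clusters in increasing order, together with the union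
of those already enumerated. -/
noncomputable def enumAux (Γ : Set ℕ) (M : ℕ) : ℕ → Clu × Set ℕ
  | 0 => (maxCluOf Γ M (sInf Γ), (maxCluOf Γ M (sInf Γ)).1)
  | j + 1 =>
    (maxCluOf Γ M (sInf (Γ \ (enumAux Γ M j).2)),
      (enumAux Γ M j).2 ∪ (maxCluOf Γ M (sInf (Γ \ (enumAux Γ M j).2))).1)

/-- The `j`-th maximal cluster `C_{∞,j}` (`j` is 0-based here). -/
noncomputable def enumClu (Γ : Set ℕ) (M : ℕ) (j : ℕ) : Clu := (enumAux Γ M j).1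

/-- The start-point `x̂_j` of the `j`-th maximal cluster (`j` is 0-based here). -/
noncomputable def hatx (Γ : Set ℕ) (M : ℕ) : ℕ → ℕ
  | 0 => sInf Γ
  | j + 1 => sInf (Γ \ (enumAux Γ M j).2)

/-- The (1-based) position `x̂_j - ∑_{t<j} diam(C_{∞,t})` at which the entry of the
`j`-th maximal cluster sits in the weighted word `ψ^ξ`. -/
noncomputable def cluPos (Γ : Set ℕ) (M : ℕ) (j : ℕ) : ℕ :=
  hatx Γ M j - ∑ t ∈ Finset.range j, sdiam (enumClu Γ M t).1

/-- The weighted word `ψ^ξ` associated to `ξ` by the grouping construction. -/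
noncomputable def psiXi (M : ℕ) (ξ : ℕ → Bool) : ℕ → ℕ := fun i =>
  letI := Classical.dec (∃ j : ℕ, i + 1 = cluPos (Gamma ξ) M j)
  if h : ∃ j : ℕ, i + 1 = cluPos (Gamma ξ) M j then (enumClu (Gamma ξ) M h.choose).2 else 0

/-- `ψ ⪯_M ζ`. -/
def PrecM (M : ℕ) (ψ ζ : ℕ → ℕ) : Prop :=
  ∀ j, (ψ j = 0 ↔ ζ j = 0) ∧ (1 ≤ ψ j → ψ j ≤ ζ j ∧ ζ j ≤ 3 * M ^ (ψ j - 1))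

/-- The set `∪_i (span(C_{∞,i}) \ C_{∞,i})` of points to be deleted. -/
def Dset (Γ : Set ℕ) (M : ℕ) : Set ℕ := ⋃ c ∈ maxClusters Γ M, spanI c.1 \ c.1

/-- `j_n(ξ)` : the `n`-th (0-based) element of `Dset`, shifted by `n` to account for
the previous deletions (this is the paper's `j_{n+1}`, a 1-based position). -/
noncomputable def jseq (Γ : Set ℕ) (M : ℕ) (n : ℕ) : ℕ := Nat.nth (· ∈ Dset Γ M) n - n

/-- The iterates `ξ^{(n)}` obtained by successively deleting the zeroes of `ξ`
lying inside spans of maximal clusters. -/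
noncomputable def xiIter (M : ℕ) (ξ : ℕ → Bool) : ℕ → ℕ → Bool
  | 0 => ξ
  | n + 1 => delta0 (xiIter M ξ n) (jseq (Gamma ξ) M n - 1)

/-- The fattened hierarchical weighted word `ζ̃(L)` (with `M = 3(L+1)`). -/
noncomputable def tzeta (L : ℕ) : ℕ → ℕ := fun j =>
  if zetaL L j = 0 then 0 else 3 * (3 * (L + 1)) ^ (zetaL L j - 1)

/-- `|A ∩ [0, n)|` for `A ⊆ ℕ`. -/
noncomputable def massCount (A : Set ℕ) (n : ℕ) : ℕ := Nat.card {a : ℕ | a ∈ A ∧ a < n}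

/-- The rows of weight at least `j`, together with row `0`. -/
def rowSet (w : ℕ → ℕ) (j : ℕ) : Set ℕ := {n | n = 0 ∨ j ≤ w n}

lemma round_step (L M : ℕ) (hL : 2 ≤ L) (hM : 3 * (L + 1) ≤ M) (w : ℕ → ℕ) (j : ℕ)
    (hsp : ∀ m n, m < n → m ∈ rowSet w j → n ∈ rowSet w j → M ^ j ≤ n - m)
    (c : ℝ) (hc : 0 ≤ c) (h : ℕ → ℝ) (h0 : h 0 = 0)
    (hlip : ∀ m n, |h m - h n| ≤ c * |(m : ℝ) - n|)
    (hdiv : ∀ n, n ≠ 0 → j + 1 ≤ w n → ∃ z : ℤ, h n + n / 2 = (L : ℝ) ^ (w n) * z) :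
    ∃ g : ℕ → ℝ, g 0 = 0 ∧
      (∀ m n, |g m - g n| ≤ (c + ((L : ℝ) / M) ^ j) * |(m : ℝ) - n|) ∧
      (∀ n, n ≠ 0 → j ≤ w n → ∃ z : ℤ, g n + n / 2 = (L : ℝ) ^ (w n) * z) := by
  have hLp : (0 : ℝ) < (L : ℝ) ^ j := by positivity
  have hMp : (0 : ℝ) < (M : ℝ) ^ j := by
    have : 0 < M := by omega
    positivity
  set G : ℕ → ℝ := fun n => (L : ℝ) ^ j * ⌊(h n + n / 2) / (L : ℝ) ^ j⌋ - n / 2 with hG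
  have hG0 : G 0 = 0 := by simp [hG, h0]
  have key : ∀ m n, m < n → m ∈ rowSet w j → n ∈ rowSet w j →
      |G m - G n| ≤ (c + ((L : ℝ) / M) ^ j) * |(m : ℝ) - n| := by
    intro m n hmn hm hn
    have hd : (M : ℝ) ^ j ≤ |(m : ℝ) - n| := by
      have h1 := hsp m n hmn hm hn
      have h2 : M ^ j + m ≤ n := by omega
      have h3 : (M : ℝ) ^ j + m ≤ n := by exact_mod_cast h2
      rw [abs_sub_comm]
      exact le_trans (by linarith) (le_abs_self _)
    have hr : (L : ℝ) ^ j ≤ ((L : ℝ) / M) ^ j * |(m : ℝ) - n| := by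
      rw [div_pow, div_mul_eq_mul_div, le_div_iff₀ hMp]
      exact mul_le_mul_of_nonneg_left hd hLp.le
    have hb : ∀ k, h k - (L : ℝ) ^ j ≤ G k ∧ G k ≤ h k := by
      intro k
      have e : (L : ℝ) ^ j * ((h k + k / 2) / (L : ℝ) ^ j) = h k + k / 2 := by
        field_simp
      have a1 := mul_le_mul_of_nonneg_left (Int.floor_le ((h k + k / 2) / (L : ℝ) ^ j)) hLp.le
      have a2 := mul_le_mul_of_nonneg_left
        (Int.lt_floor_add_one ((h k + k / 2) / (L : ℝ) ^ j)).le hLp.le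
      simp only [hG]
      constructor <;> linarith
    have := hlip m n
    rw [abs_le] at this ⊢
    have bm := hb m
    have bn := hb n
    constructor <;> linarith
  have hcr : 0 ≤ c + ((L : ℝ) / M) ^ j := by positivity
  have hLO : LipschitzOnWith ⟨c + ((L : ℝ) / M) ^ j, hcr⟩ G (rowSet w j) := by
    apply LipschitzOnWith.of_dist_le_mul
    intro m hm n hn
    rw [Real.dist_eq, Nat.dist_eq]
    show _ ≤ (c + ((L : ℝ) / M) ^ j) * _
    rcases lt_trichotomy m n with hmn | hmn | hmn
    · exact key m n hmn hm hn
    · subst hmn; simp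
    · rw [abs_sub_comm, abs_sub_comm (m : ℝ)]
      exact key n m hmn hn hm
  obtain ⟨g, hg, hgG⟩ := hLO.extend_real
  refine ⟨g, ?_, ?_, ?_⟩
  · rw [← hgG (Or.inl rfl), hG0]
  · intro m n
    have := hg.dist_le_mul m n
    rw [Real.dist_eq, Nat.dist_eq] at this
    exact this
  · intro n hn hw
    rw [← hgG (Or.inr hw)]
    rcases hw.eq_or_lt with hw | hw
    · exact ⟨⌊(h n + n / 2) / (L : ℝ) ^ j⌋, by simp only [hG]; rw [← hw]; ring⟩
    · obtain ⟨z, hz⟩ := hdiv n hn hw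
      refine ⟨z, ?_⟩
      obtain ⟨d, hd⟩ := Nat.exists_eq_add_of_lt hw
      have e : (L : ℝ) ^ (w n) * z / (L : ℝ) ^ j = (((L : ℤ) ^ (d + 1) * z : ℤ) : ℝ) := by
        rw [hd]; push_cast; field_simp; ring
      simp only [hG]
      rw [hz, e, Int.floor_intCast, ← e]
      field_simp; ring

lemma exists_level (L M : ℕ) (hL : 2 ≤ L) (hM : 3 * (L + 1) ≤ M) (w : ℕ → ℕ) (K : ℕ)
    (hK : ∀ n, w n ≤ K)
    (hsp : ∀ j, 1 ≤ j → ∀ m n, m < n → m ∈ rowSet w j → n ∈ rowSet w j → M ^ j ≤ n - m)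
    (i : ℕ) : ∀ j, 1 ≤ j → j + i = K + 1 →
    ∃ g : ℕ → ℝ, g 0 = 0 ∧
      (∀ m n, |g m - g n| ≤ (((L : ℝ) / M) ^ j / (1 - (L : ℝ) / M)) * |(m : ℝ) - n|) ∧
      (∀ n, n ≠ 0 → j ≤ w n → ∃ z : ℤ, g n + n / 2 = (L : ℝ) ^ (w n) * z) := by
  have hMp : (0 : ℝ) < M := by
    have : 0 < M := by omega
    positivity
  have hr : (L : ℝ) / M < 1 := by
    rw [div_lt_one hMp]
    exact_mod_cast (by omega : L < M)
  have hr1 : 0 < 1 - (L : ℝ) / M := by linarith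
  induction i with
  | zero =>
    intro j hj hji
    refine ⟨fun _ => 0, rfl, ?_, ?_⟩
    · intro m n
      simp only [sub_self, abs_zero]
      positivity
    · intro n _ hn
      have := hK n
      omega
  | succ i ih =>
    intro j hj hji
    obtain ⟨h, h0, hlip, hdiv⟩ := ih (j + 1) (by omega) (by omega)
    obtain ⟨g, g0, glip, gdiv⟩ := round_step L M hL hM w j (hsp j hj) _ (by positivity) h h0 hlip hdiv
    refine ⟨g, g0, ?_, gdiv⟩
    have e : ((L : ℝ) / M) ^ (j + 1) / (1 - (L : ℝ) / M) + ((L : ℝ) / M) ^ j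
        = ((L : ℝ) / M) ^ j / (1 - (L : ℝ) / M) := by
      generalize (L : ℝ) / M = r at *
      field_simp
      ring
    rw [e] at glip
    exact glip

/-- Column function for bounded weights. -/
lemma exists_columns (L M : ℕ) (hL : 2 ≤ L) (hM : 3 * (L + 1) ≤ M) (w : ℕ → ℕ) (K : ℕ)
    (hK : ∀ n, w n ≤ K)
    (hsp : ∀ j, 1 ≤ j → ∀ m n, m < n → m ∈ rowSet w j → n ∈ rowSet w j → M ^ j ≤ n - m) :
    ∃ x : ℕ → ℕ, x 0 = 0 ∧ (∀ n, x (n + 1) = x n ∨ x (n + 1) = x n + 1) ∧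
      (∀ n, n ≠ 0 → 1 ≤ x n) ∧ (∀ n, n ≠ 0 → L ^ (w n) ∣ x n) ∧
      (∀ m n, m < n → 1 ≤ w n → x m < x n ∨ (m ≠ 0 ∧ w m = 0)) := by
  obtain ⟨g, g0, glip, gdiv⟩ := exists_level L M hL hM w K hK hsp K 1 le_rfl (by omega)
  have hMp : (0 : ℝ) < M := by
    have : 0 < M := by omega
    positivity
  have hr : (L : ℝ) / M < 1 / 3 := by
    rw [div_lt_iff₀ hMp]
    have : (3 * (L + 1) : ℝ) ≤ M := by exact_mod_cast hM
    linarith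
  have hc : ((L : ℝ) / M) ^ 1 / (1 - (L : ℝ) / M) < 1 / 2 := by
    rw [div_lt_iff₀ (by linarith)]
    linarith
  set c := ((L : ℝ) / M) ^ 1 / (1 - (L : ℝ) / M)
  set f : ℕ → ℝ := fun n => g n + n / 2 with hf
  have f0 : f 0 = 0 := by simp [hf, g0]
  have hinc : ∀ m n, m < n → 0 < f n - f m ∧ f n - f m ≤ (n : ℝ) - m := by
    intro m n hmn
    have h1 : (m : ℝ) < n := by exact_mod_cast hmn
    have h2 := glip m n
    rw [abs_sub_comm (m : ℝ), abs_of_pos (sub_pos.2 h1), abs_le] at h2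
    have h3 : c * ((n : ℝ) - m) < 1 / 2 * ((n : ℝ) - m) :=
      mul_lt_mul_of_pos_right hc (sub_pos.2 h1)
    simp only [hf]
    constructor <;> linarith [h2.1, h2.2]
  have hpos : ∀ n, n ≠ 0 → 0 < f n := by
    intro n hn
    have := (hinc 0 n (Nat.pos_of_ne_zero hn)).1
    rwa [f0, sub_zero] at this
  have hint : ∀ n, n ≠ 0 → 1 ≤ w n → ∃ z : ℕ, f n = ((L ^ (w n) * z : ℕ) : ℝ) := by
    intro n hn hw
    obtain ⟨z, hz⟩ := gdiv n hn hw
    have h1 := hpos n hn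
    have hz0 : 0 ≤ z := by
      by_contra hneg
      have h2 : (z : ℝ) ≤ 0 := by exact_mod_cast (not_le.1 hneg).le
      have h3 : (L : ℝ) ^ (w n) * z ≤ 0 :=
        mul_nonpos_of_nonneg_of_nonpos (by positivity) h2
      have h4 : f n = (L : ℝ) ^ (w n) * z := hz
      linarith
    lift z to ℕ using hz0
    refine ⟨z, ?_⟩
    have h4 : f n = (L : ℝ) ^ (w n) * ((z : ℤ) : ℝ) := hz
    rw [h4]; push_cast; rfl
  refine ⟨fun n => ⌈f n⌉₊, ?_, ?_, ?_, ?_, ?_⟩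
  · simp [f0]
  · intro n
    have h1 := hinc n (n + 1) (by omega)
    have h2 : ⌈f n⌉₊ ≤ ⌈f (n + 1)⌉₊ := Nat.ceil_le_ceil (by linarith)
    have h3 : ⌈f (n + 1)⌉₊ ≤ ⌈f n⌉₊ + 1 := by
      rw [Nat.ceil_le]
      have := Nat.le_ceil (f n)
      have h4 := h1.2
      push_cast at h4 ⊢
      linarith
    show ⌈f (n + 1)⌉₊ = ⌈f n⌉₊ ∨ ⌈f (n + 1)⌉₊ = ⌈f n⌉₊ + 1
    omega
  · intro n hn
    exact Nat.ceil_pos.2 (hpos n hn)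
  · intro n hn
    show L ^ (w n) ∣ ⌈f n⌉₊
    rcases Nat.eq_zero_or_pos (w n) with hw | hw
    · simp [hw]
    · obtain ⟨z, hz⟩ := hint n hn hw
      rw [hz, Nat.ceil_natCast]
      exact Dvd.intro _ rfl
  · intro m n hmn hw
    by_cases hm : m ≠ 0 ∧ w m = 0
    · exact Or.inr hm
    · left
      show ⌈f m⌉₊ < ⌈f n⌉₊
      have h1 := (hinc m n hmn).1
      have hmint : ∃ z : ℕ, f m = (z : ℝ) := by
        by_cases hm0 : m = 0
        · exact ⟨0, by simp [hm0, f0]⟩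
        · obtain ⟨z, hz⟩ := hint m hm0 (by
            by_contra h
            exact hm ⟨hm0, by omega⟩)
          exact ⟨_, hz⟩
      obtain ⟨a, ha⟩ := hmint
      rw [ha, Nat.ceil_natCast, Nat.lt_ceil]
      linarith

lemma le_zetaL (L x k : ℕ) (hL : 2 ≤ L) (hx : 1 ≤ x) (h : L ^ k ∣ x) : k ≤ zetaL L (x - 1) := by
  unfold zetaL
  rw [Nat.sub_add_cancel hx]
  apply le_csSup
  · refine ⟨x, fun a (ha : L ^ a ∣ x) => ?_⟩
    exact (Nat.lt_pow_self (by omega)).le.trans (Nat.le_of_dvd hx ha)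
  · exact h

/-- Compactness: column functions exist for unbounded weights. -/
lemma exists_columns_inf (L M : ℕ) (hL : 2 ≤ L) (hM : 3 * (L + 1) ≤ M) (w : ℕ → ℕ)
    (hsp : ∀ j, 1 ≤ j → ∀ m n, m < n → m ∈ rowSet w j → n ∈ rowSet w j → M ^ j ≤ n - m) :
    ∃ x : ℕ → ℕ, x 0 = 0 ∧ (∀ n, x (n + 1) = x n ∨ x (n + 1) = x n + 1) ∧
      (∀ n, n ≠ 0 → 1 ≤ x n) ∧ (∀ n, n ≠ 0 → L ^ (w n) ∣ x n) ∧
      (∀ m n, m < n → 1 ≤ w n → x m < x n ∨ (m ≠ 0 ∧ w m = 0)) := by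
  have hex : ∀ K, ∃ x : ℕ → ℕ, x 0 = 0 ∧ (∀ n, x (n + 1) = x n ∨ x (n + 1) = x n + 1) ∧
      (∀ n, n ≠ 0 → 1 ≤ x n) ∧ (∀ n, n ≠ 0 → L ^ (min (w n) K) ∣ x n) ∧
      (∀ m n, m < n → 1 ≤ min (w n) K → x m < x n ∨ (m ≠ 0 ∧ min (w m) K = 0)) := by
    intro K
    apply exists_columns L M hL hM (fun n => min (w n) K) K (fun n => min_le_right _ _)
    intro j hj m n hmn hm hn
    apply hsp j hj m n hmn
    · exact hm.imp id (fun h => le_trans h (min_le_left _ _))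
    · exact hn.imp id (fun h => le_trans h (min_le_left _ _))
  choose X hX0 hXs hXp hXd hXh using hex
  have hle : ∀ K n, X K n ≤ n := by
    intro K n
    induction n with
    | zero => exact (hX0 K).le
    | succ n ih => have := hXs K n; omega
  have hlim : ∀ n, ∃ v, ∀ᶠ K in (hyperfilter ℕ : Filter ℕ), X K n = v := by
    intro n
    have h1 : ∀ᶠ K in (hyperfilter ℕ : Filter ℕ), ∃ v ∈ Set.Iic n, X K n = v :=
      Filter.Eventually.of_forall fun K => ⟨_, hle K n, rfl⟩
    obtain ⟨v, _, hv⟩ := (Ultrafilter.eventually_exists_mem_iff (Set.finite_Iic n)).1 h1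
    exact ⟨v, hv⟩
  choose x hx using hlim
  have hbig : ∀ n, ∀ᶠ K in (hyperfilter ℕ : Filter ℕ), n ≤ K := fun n =>
    Nat.hyperfilter_le_atTop (eventually_ge_atTop n)
  refine ⟨x, ?_, ?_, ?_, ?_, ?_⟩
  · obtain ⟨K, hK⟩ := (hx 0).exists
    rw [← hK, hX0]
  · intro n
    obtain ⟨K, h1, h2⟩ := ((hx n).and (hx (n + 1))).exists
    rw [← h1, ← h2]
    exact hXs K n
  · intro n hn
    obtain ⟨K, h1⟩ := (hx n).exists
    rw [← h1]
    exact hXp K n hn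
  · intro n hn
    obtain ⟨K, h1, h2⟩ := ((hx n).and (hbig (w n))).exists
    have := hXd K n hn
    rwa [min_eq_left h2, h1] at this
  · intro m n hmn hw
    obtain ⟨K, ⟨h1, h2⟩, h3, h4⟩ :=
      (((hx m).and (hx n)).and ((hbig (w m)).and (hbig (w n)))).exists
    have := hXh K m n hmn
    rw [min_eq_left h3, min_eq_left h4, h1, h2] at this
    exact this hw

theorem statement_4 (L M : ℕ) (hL : 2 ≤ L) (hM : 3 * (L + 1) ≤ M)
    (ψ : ℕ → ℕ) (hψ : Spaced M ψ) : InfOpenPermitted (zetaL L) ψ := by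
  obtain ⟨_, hA, hB⟩ := hψ
  have hB' : ∀ j, 1 ≤ j → ∀ n, j ≤ ψ n → M ^ j ≤ n + 1 := by
    intro j hj n hn
    have h1 := hB j hj ⟨n, hn⟩
    have h2 : sInf (idxSet ψ j) ≤ n := Nat.sInf_le hn
    unfold idx at h1
    omega
  obtain ⟨x, x0, xs, xp, xd, xh⟩ := exists_columns_inf L M hL hM (fun n => ψ (n - 1)) (by
    intro j hj m n hmn hm hn
    have hn' : j ≤ ψ (n - 1) := hn.resolve_left (by omega)
    rcases Nat.eq_zero_or_pos m with hm0 | hm0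
    · have := hB' j hj _ hn'
      omega
    · have hm' : j ≤ ψ (m - 1) := hm.resolve_left (by omega)
      have h1 := hA (m - 1) (n - 1) (by omega)
      have h2 : M ^ j ≤ M ^ min (ψ (m - 1)) (ψ (n - 1)) :=
        Nat.pow_le_pow_right (by omega) (le_min hm' hn')
      omega)
  refine ⟨fun n => (x n, n), by simp [x0], ?_, ?_, ?_⟩
  · intro n
    rcases xs n with h | h
    · exact Or.inl ⟨h, rfl⟩
    · exact Or.inr ⟨h, rfl⟩
  · intro n
    by_cases hn : n = 0
    · left
      simp [hn, x0]
    · exact Or.inr ⟨xp n hn, Nat.one_le_iff_ne_zero.2 hn,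
        le_zetaL L (x n) _ hL (xp n hn) (xd n hn)⟩
  · have key : ∀ i j, i < j → Heavy ψ (x i, i) → Heavy ψ (x j, j) → x i ≠ x j := by
      intro i j hij hi hj
      have hj' : 1 ≤ ψ (j - 1) := hj.resolve_left (by show ¬ j = 0; omega)
      rcases xh i j hij hj' with h | ⟨h1, h2⟩
      · exact h.ne
      · have : 1 ≤ ψ (i - 1) := hi.resolve_left h1
        omega
    intro i j hne hi hj
    rcases lt_trichotomy i j with h | h | h
    · exact key i j h hi hj
    · exact absurd (by rw [h]) hne
    · exact (key j i h hj hi).symm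

end Paper
end

section
/- Let ξ be distributed according to the product Bernoulli measure ℙ_p on {0,1}^ℕ with parameter p > 0, and let M be an integer with 3 ≤ M < (64p)^{−1/2}. Then ℙ_p-almost surely κ(x) < ∞ for every x ∈ Γ(ξ), i.e. every point of Γ belongs only to clusters of finitely many levels in the grouping construction with spacing parameter M. -/
open Filter Set MeasureTheory
open scoped ENNReal NNReal

namespace Paper

/-! ### Witnesses -/

/-- Chains of at least one witness of the family `W`, glued at level `k + 1`. -/
inductive Ch (t k : ℕ) (W : ℕ → Finset ℕ → Prop) : ℕ → Finset ℕ → Prop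
  | single (m : ℕ) (F : Finset ℕ) : W m F → Ch t k W m F
  | cons (m m1 m2 : ℕ) (F1 F2 : Finset ℕ) : k + 1 ≤ m1 → k + 1 ≤ m2 → m + k = m1 + m2 →
      W m1 F1 → Ch t k W m2 F2 → (∀ x ∈ F1, ∀ y ∈ F2, x < y) →
      (∃ x ∈ F1, ∃ y ∈ F2, y < x + t) → Ch t k W m (F1 ∪ F2)

/-- Witnesses of clusters of level at most `k` and mass `m`. -/
def Wit (M : ℕ) : ℕ → ℕ → Finset ℕ → Prop
  | 0 => fun m F => m = 1 ∧ ∃ x, F = {x}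
  | k + 1 => Ch (M ^ (k + 1)) k (Wit M k)

lemma Ch.nonempty {t k : ℕ} {W : ℕ → Finset ℕ → Prop} (hW : ∀ m F, W m F → F.Nonempty)
    {m : ℕ} {F : Finset ℕ} (h : Ch t k W m F) : F.Nonempty := by
  induction h with
  | single m F h => exact hW m F h
  | cons m m1 m2 F1 F2 h1 h2 h3 h4 h5 h6 h7 ih => exact ih.mono Finset.subset_union_right

lemma Wit.nonempty {M k : ℕ} : ∀ {m : ℕ} {F : Finset ℕ}, Wit M k m F → F.Nonempty := by
  induction k with
  | zero => rintro m F ⟨-, x, rfl⟩; simp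
  | succ k ih => intro m F h; exact Ch.nonempty (fun _ _ h => ih h) h

lemma Wit.succ {M k m : ℕ} {F : Finset ℕ} (h : Wit M k m F) : Wit M (k + 1) m F :=
  Ch.single m F h

lemma Wit.mono {M k l m : ℕ} {F : Finset ℕ} (h : Wit M k m F) (hkl : k ≤ l) : Wit M l m F := by
  induction hkl with
  | refl => exact h
  | step _ ih => exact ih.succ

lemma Wit.pred {M k m : ℕ} {F : Finset ℕ} (h : Wit M (k + 1) m F) (hm : m ≤ k + 1) :
    Wit M k m F := by
  cases h with
  | single _ _ h => exact h
  | cons _ m1 m2 F1 F2 h1 h2 h3 => omega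

lemma Wit.diag {M k m : ℕ} {F : Finset ℕ} (h : Wit M k m F) : Wit M m m F := by
  rcases le_total k m with h1 | h1
  · exact h.mono h1
  · induction h1 with
    | refl => exact h
    | @step j hj ih =>
      exact ih (h.pred (by have : m ≤ j := hj
                           omega))

lemma pow_aux {M k a b m : ℕ} (hM : 3 ≤ M) (ha : k + 1 ≤ a) (hb : k + 1 ≤ b) (h : m + k = a + b) :
    M ^ a + M ^ b + M ^ (k + 1) ≤ M ^ m := by
  obtain ⟨u, rfl⟩ := Nat.exists_eq_add_of_le ha
  obtain ⟨v, rfl⟩ := Nat.exists_eq_add_of_le hb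
  have : m = k + (1 + u + (1 + v)) := by omega
  subst this
  have hu : 1 ≤ M ^ u := Nat.one_le_pow _ _ (by omega)
  have hv : 1 ≤ M ^ v := Nat.one_le_pow _ _ (by omega)
  have key : M * M ^ u + M * M ^ v + M ≤ M * M ^ u * (M * M ^ v) := by
    have h1 : 3 * (M * M ^ u) ≤ M * M ^ u * (M * M ^ v) := by
      rw [mul_comm 3]
      exact Nat.mul_le_mul_left _ (by nlinarith)
    have h2 : 3 * (M * M ^ v) ≤ M * M ^ u * (M * M ^ v) := by
      exact Nat.mul_le_mul_right _ (by nlinarith)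
    have h3 : 3 * M ≤ M * M ^ u * (M * M ^ v) := by
      calc 3 * M = 3 * (M * 1) := by ring
        _ ≤ 3 * (M * M ^ v) := by gcongr
        _ ≤ _ := h2
    omega
  calc M ^ (k + 1 + u) + M ^ (k + 1 + v) + M ^ (k + 1)
      = M ^ k * (M * M ^ u + M * M ^ v + M) := by ring
    _ ≤ M ^ k * (M * M ^ u * (M * M ^ v)) := Nat.mul_le_mul_left _ key
    _ = _ := by ring

lemma Ch.diam {M k : ℕ} (hM : 3 ≤ M) {W : ℕ → Finset ℕ → Prop}
    (hW : ∀ m F, W m F → ∀ x ∈ F, ∀ y ∈ F, y ≤ x + M ^ m)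
    {m : ℕ} {F : Finset ℕ} (h : Ch (M ^ (k + 1)) k W m F) :
    ∀ x ∈ F, ∀ y ∈ F, y ≤ x + M ^ m := by
  induction h with
  | single m F h => exact hW m F h
  | cons m m1 m2 F1 F2 h1 h2 h3 h4 h5 h6 h7 ih =>
    obtain ⟨a, ha, b, hb, hab⟩ := h7
    have hp := pow_aux hM h1 h2 h3
    have hW1 := hW _ _ h4
    intro x hx y hy
    rw [Finset.mem_union] at hx hy
    rcases hx with hx | hx <;> rcases hy with hy | hy
    · have := hW1 x hx y hy; omega
    · have e1 := hW1 x hx a ha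
      have e2 := ih b hb y hy
      omega
    · have := h6 y hy x hx; omega
    · have := ih x hx y hy; omega

lemma Wit.diam {M k : ℕ} (hM : 3 ≤ M) :
    ∀ {m : ℕ} {F : Finset ℕ}, Wit M k m F → ∀ x ∈ F, ∀ y ∈ F, y ≤ x + M ^ m := by
  induction k with
  | zero => rintro m F ⟨-, x, rfl⟩; simp
  | succ k ih => intro m F h; exact Ch.diam hM (fun _ _ h => ih h) h

/-! ### Weights of families of witnesses -/

/-- Total weight of the members of the family with least element `s`. -/
noncomputable def wt (q : ℝ≥0∞) (P : Finset ℕ → Prop) (s : ℕ) : ℝ≥0∞ :=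
  ∑' F : {F : Finset ℕ | P F ∧ IsLeast (F : Set ℕ) s}, q ^ F.1.card

lemma tsum_range_le' {α β : Type*} (g : α → β) (f : β → ℝ≥0∞) :
    ∑' x : Set.range g, f x ≤ ∑' i, f (g i) := by
  have := ENNReal.tsum_le_tsum_comp_of_surjective (f := Set.rangeFactorization g)
    Set.rangeFactorization_surjective (fun x : Set.range g => f x)
  simpa using this

/-- Index type of the glued pairs. -/
abbrev Glue (t : ℕ) (P1 P2 : Finset ℕ → Prop) (s : ℕ) : Type :=
  Σ F1 : {F : Finset ℕ | P1 F ∧ IsLeast (F : Set ℕ) s}, Σ d : Fin t,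
    {F : Finset ℕ | P2 F ∧ IsLeast (F : Set ℕ) (F1.1.sup id + d + 1)}

/-- The glued finset. -/
def glue (t : ℕ) (P1 P2 : Finset ℕ → Prop) (s : ℕ) (z : Glue t P1 P2 s) : Finset ℕ :=
  z.1.1 ∪ z.2.2.1

lemma glue_card (t : ℕ) (P1 P2 : Finset ℕ → Prop) (s : ℕ) (z : Glue t P1 P2 s) :
    (glue t P1 P2 s z).card = z.1.1.card + z.2.2.1.card := by
  obtain ⟨⟨F1, h1⟩, d, ⟨F2, h2⟩⟩ := z
  apply Finset.card_union_of_disjoint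
  rw [Finset.disjoint_left]
  intro x hx hx2
  have e1 : x ≤ F1.sup id := Finset.le_sup (f := id) hx
  have e2 := h2.2.2 hx2
  simp only at e2
  omega

lemma wt_glue (q : ℝ≥0∞) (t : ℕ) (P1 P2 : Finset ℕ → Prop) (s : ℕ) (A C : ℝ≥0∞)
    (h1 : wt q P1 s ≤ A) (h2 : ∀ s, wt q P2 s ≤ C) :
    ∑' F : Set.range (glue t P1 P2 s), q ^ F.1.card ≤ A * (t * C) := by
  refine (tsum_range_le' (glue t P1 P2 s) (fun F => q ^ F.card)).trans ?_
  simp_rw [glue_card, pow_add]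
  rw [ENNReal.tsum_sigma']
  calc _ ≤ ∑' F1 : {F : Finset ℕ | P1 F ∧ IsLeast (F : Set ℕ) s}, q ^ F1.1.card * (t * C) := by
        refine ENNReal.tsum_le_tsum fun F1 => ?_
        rw [ENNReal.tsum_sigma']
        simp_rw [ENNReal.tsum_mul_left]
        gcongr
        rw [tsum_fintype]
        calc _ ≤ ∑ d : Fin t, C := Finset.sum_le_sum fun d _ => h2 _
          _ = t * C := by simp
    _ = wt q P1 s * (t * C) := by rw [ENNReal.tsum_mul_right]; rfl
    _ ≤ _ := by gcongr

lemma Ch_subset {t k : ℕ} {W : ℕ → Finset ℕ → Prop} (hW : ∀ m F, W m F → F.Nonempty) (m s : ℕ) :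
    {F : Finset ℕ | Ch t k W m F ∧ IsLeast (F : Set ℕ) s} ⊆
      {F : Finset ℕ | W m F ∧ IsLeast (F : Set ℕ) s} ∪
        ⋃ m1 ∈ Finset.Ico (k + 1) m, Set.range (glue t (W m1) (Ch t k W (m + k - m1)) s) := by
  rintro F ⟨h, hs⟩
  cases h with
  | single _ _ h => exact Or.inl ⟨h, hs⟩
  | cons _ m1 m2 F1 F2 h1 h2 h3 h4 h5 h6 h7 =>
    right
    have hm2 : m + k - m1 = m2 := by omega
    rw [Set.mem_iUnion₂]
    refine ⟨m1, by rw [Finset.mem_Ico]; omega, ?_⟩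
    rw [hm2]
    have hF1 := hW _ _ h4
    have hF2 : F2.Nonempty := h5.nonempty hW
    have hl1 : IsLeast (F1 : Set ℕ) s := by
      have hs1 := hs.1
      have hs2 := hs.2
      rw [Finset.mem_coe, Finset.mem_union] at hs1
      have lb : ∀ x ∈ F1, s ≤ x := fun x hx => hs2 (by simp [hx])
      refine ⟨?_, fun x hx => lb x hx⟩
      rcases hs1 with hs1 | hs1
      · exact hs1
      · obtain ⟨x, hx⟩ := hF1
        have := h6 x hx s hs1
        have := lb x hx
        omega
    have hmax : F1.sup id ∈ F1 := by
      obtain ⟨y, hy, hy'⟩ := Finset.exists_mem_eq_sup F1 hF1 id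
      rw [hy']; exact hy
    have hmin := F2.min'_mem hF2
    have hlt := h6 _ hmax _ hmin
    obtain ⟨a, ha, b, hb, hab⟩ := h7
    have e1 : a ≤ F1.sup id := Finset.le_sup (f := id) ha
    have e2 := F2.min'_le b hb
    refine ⟨⟨⟨F1, h4, hl1⟩, ⟨F2.min' hF2 - F1.sup id - 1, by omega⟩, ⟨F2, h5, ?_⟩⟩, rfl⟩
    have : F1.sup id + (F2.min' hF2 - F1.sup id - 1) + 1 = F2.min' hF2 := by omega
    simp only [this]
    exact F2.isLeast_min' hF2

lemma wt_Ch (q : ℝ≥0∞) (t k : ℕ) (W : ℕ → Finset ℕ → Prop) (hW : ∀ m F, W m F → F.Nonempty)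
    (A C : ℕ → ℝ≥0∞) (hA : ∀ m s, wt q (W m) s ≤ A m)
    (hC : ∀ m, A m + ∑ m1 ∈ Finset.Ico (k + 1) m, A m1 * (t * C (m + k - m1)) ≤ C m) :
    ∀ m s, wt q (Ch t k W m) s ≤ C m := by
  intro m
  induction m using Nat.strong_induction_on with
  | _ m ih =>
    intro s
    refine le_trans ?_ (hC m)
    refine (ENNReal.tsum_mono_subtype (fun F : Finset ℕ => q ^ F.card)
      (Ch_subset hW m s)).trans ?_
    refine (ENNReal.tsum_union_le (fun F : Finset ℕ => q ^ F.card) _ _).trans ?_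
    refine add_le_add (hA m s) ?_
    refine (ENNReal.tsum_biUnion_le (fun F : Finset ℕ => q ^ F.card) _ _).trans ?_
    refine Finset.sum_le_sum fun m1 hm1 => ?_
    rw [Finset.mem_Ico] at hm1
    exact wt_glue q t _ _ s _ _ (hA m1 s) (ih _ (by omega))

/-- Growth rates. -/
noncomputable def rr : ℕ → ℝ≥0
  | 0 => 1 / 16
  | k + 1 => rr k * (1 + rr k ^ k / 4)

lemma rr_le (k : ℕ) : (rr k : ℝ) ≤ (2 - (1 / 2) ^ k) / 16 := by
  induction k with
  | zero => simp [rr]; norm_num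
  | succ k ih =>
    have h0 : (0 : ℝ) ≤ (1 / 2) ^ k := by positivity
    have h1 : ((1 : ℝ) / 2) ^ k ≤ 1 := pow_le_one₀ (by norm_num) (by norm_num)
    have h2 : (rr k : ℝ) ≤ 1 / 2 := by linarith
    have h3 : (rr k : ℝ) ^ k ≤ (1 / 2) ^ k := pow_le_pow_left₀ (by positivity) h2 k
    simp only [rr]
    push_cast
    rw [pow_succ]
    calc (rr k : ℝ) * (1 + rr k ^ k / 4) ≤ (2 - (1 / 2) ^ k) / 16 * (1 + (1 / 2) ^ k / 4) := by
          gcongr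
          linarith
      _ ≤ _ := by nlinarith

lemma rr_le' (k : ℕ) : rr k ≤ 1 / 8 := by
  have := rr_le k
  have h0 : (0 : ℝ) ≤ (1 / 2) ^ k := by positivity
  rw [← NNReal.coe_le_coe]
  push_cast
  linarith

/-- Weight bound. -/
noncomputable def AA (M k m : ℕ) : ℝ≥0 := 1 / (4 * M) * (rr k / M) ^ m

lemma AA_step (M : ℕ) (hM : 3 ≤ M) (k m : ℕ) :
    AA M k m + ∑ m1 ∈ Finset.Ico (k + 1) m,
      AA M k m1 * ((M ^ (k + 1) : ℕ) * (AA M k (m + k - m1) * (1 + rr k ^ k / 4) ^ (m - m1 - 1)))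
      ≤ AA M k m * (1 + rr k ^ k / 4) ^ (m - k - 1) := by
  have hM0 : (M : ℝ≥0) ≠ 0 := by positivity
  set x : ℝ≥0 := rr k ^ k / 4 with hx
  have key : ∀ m1 ∈ Finset.Ico (k + 1) m,
      AA M k m1 * ((M ^ (k + 1) : ℕ) * (AA M k (m + k - m1) * (1 + x) ^ (m - m1 - 1)))
       = AA M k m * (x * (1 + x) ^ (m - m1 - 1)) := by
    intro m1 hm1
    rw [Finset.mem_Ico] at hm1
    obtain ⟨d, rfl⟩ := Nat.exists_eq_add_of_lt hm1.2
    have e1 : m1 + d + 1 + k - m1 = d + 1 + k := by omega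
    have e2 : m1 + d + 1 - m1 - 1 = d := by omega
    rw [e1, e2]
    simp only [AA, hx]
    push_cast
    rw [div_pow, div_pow, div_pow]
    field_simp
    ring
  rw [Finset.sum_congr rfl key, ← Finset.mul_sum, ← Finset.mul_sum]
  rcases Nat.lt_or_ge m (k + 1) with h | h
  · rw [Finset.Ico_eq_empty (by omega)]
    have : m - k - 1 = 0 := by omega
    simp [this]
  · obtain ⟨n, rfl⟩ := Nat.exists_eq_add_of_le h
    have e : k + 1 + n - k - 1 = n := by omega
    have hs : ∀ n : ℕ, 1 + x * ∑ m1 ∈ Finset.Ico (k + 1) (k + 1 + n), (1 + x) ^ (k + 1 + n - m1 - 1)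
        = (1 + x) ^ n := by
      intro n
      have : ∑ m1 ∈ Finset.Ico (k + 1) (k + 1 + n), (1 + x) ^ (k + 1 + n - m1 - 1)
          = ∑ i ∈ Finset.range n, (1 + x) ^ i := by
        rw [Finset.sum_Ico_eq_sum_range, ← Finset.sum_range_reflect]
        have : k + 1 + n - (k + 1) = n := by omega
        rw [this]
        refine Finset.sum_congr rfl fun i hi => ?_
        rw [Finset.mem_range] at hi
        congr 1
        omega
      rw [this]
      clear this
      induction n with
      | zero => simp
      | succ n ih =>
        rw [Finset.sum_range_succ, mul_add, ← add_assoc, ih]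
        ring
    rw [e, ← hs n, mul_add, mul_one]

lemma wt_Wit (M : ℕ) (hM : 3 ≤ M) (q : ℝ≥0∞) (hq : q ≤ ((1 / (64 * M ^ 2) : ℝ≥0) : ℝ≥0∞)) (k : ℕ) :
    ∀ m s, wt q (Wit M k m) s ≤ (AA M k m : ℝ≥0) := by
  have hM0 : (M : ℝ≥0) ≠ 0 := by positivity
  induction k with
  | zero =>
    intro m s
    unfold wt
    have hsub : {F : Finset ℕ | Wit M 0 m F ∧ IsLeast (F : Set ℕ) s} ⊆
        (if m = 1 then {{s}} else ∅ : Set (Finset ℕ)) := by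
      rintro F ⟨⟨rfl, x, rfl⟩, h⟩
      have := h.1
      simp at this
      simp [this]
    refine (ENNReal.tsum_mono_subtype (fun F : Finset ℕ => q ^ F.card) hsub).trans ?_
    by_cases h : m = 1
    · subst h
      rw [if_pos rfl, tsum_singleton ({s} : Finset ℕ) (fun F : Finset ℕ => q ^ F.card)]
      simp only [Finset.card_singleton, pow_one]
      refine hq.trans (le_of_eq ?_)
      congr 1
      simp only [AA, rr]
      field_simp
      norm_num
    · rw [if_neg h]
      simp
  | succ k ih =>
    intro m s
    have h := wt_Ch q (M ^ (k + 1)) k (Wit M k) (fun _ _ h => h.nonempty)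
      (fun m => (AA M k m : ℝ≥0)) (fun m => (AA M k m * (1 + rr k ^ k / 4) ^ (m - k - 1) : ℝ≥0))
      ih (by
        intro m
        refine le_trans (le_of_eq ?_) (ENNReal.coe_le_coe.2 (AA_step M hM k m))
        push_cast
        congr 1
        refine Finset.sum_congr rfl fun m1 hm1 => ?_
        rw [Finset.mem_Ico] at hm1
        have : m + k - m1 - k - 1 = m - m1 - 1 := by omega
        rw [this]) m s
    refine h.trans (ENNReal.coe_le_coe.2 ?_)
    simp only [AA, rr]
    rw [mul_assoc]
    gcongr
    rw [mul_div_right_comm, mul_pow]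
    gcongr
    · exact le_add_of_nonneg_right (by positivity)
    · omega

/-! ### Deterministic part -/

/-- Every point is spanned by witnesses of boundedly many masses. -/
def GoodG (M : ℕ) (Γ : Set ℕ) : Prop :=
  ∀ x, ∃ N, ∀ m, N ≤ m → ∀ k F, Wit M k m F → (F : Set ℕ) ⊆ Γ →
    (∃ a ∈ F, a ≤ x) → (∃ b ∈ F, x ≤ b) → False

/-- `F` spans `c`. -/
def Spans (F : Finset ℕ) (c : Set ℕ) : Prop :=
  (F : Set ℕ) ⊆ c ∧ ∀ y ∈ c, (∃ a ∈ F, a ≤ y) ∧ ∃ b ∈ F, y ≤ b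

/-- Invariants of the construction. -/
structure Inv (Γ : Set ℕ) (M k : ℕ) (S : Set Clu) : Prop where
  sub : ∀ c ∈ S, c.1 ⊆ Γ
  wit : ∀ c ∈ S, ∃ F, Spans F c.1 ∧ Wit M k c.2 F
  ord : ∀ c ∈ S, ∀ d ∈ S, c ≠ d → cluLT c.1 d.1 ∨ cluLT d.1 c.1

section det

variable {Γ : Set ℕ} {M k : ℕ} {S : Set Clu}

lemma Inv.nonempty (hI : Inv Γ M k S) {c : Clu} (hc : c ∈ S) : c.1.Nonempty := by
  obtain ⟨F, hF, hW⟩ := hI.wit c hc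
  obtain ⟨x, hx⟩ := hW.nonempty
  exact ⟨x, hF.1 hx⟩

lemma Inv.inf_mem (hI : Inv Γ M k S) {c : Clu} (hc : c ∈ S) : sInf c.1 ∈ c.1 :=
  Nat.sInf_mem (hI.nonempty hc)

lemma Inv.lt_iff (hI : Inv Γ M k S) {c d : Clu} (hc : c ∈ S) (hd : d ∈ S) :
    cluLT c.1 d.1 ↔ sInf c.1 < sInf d.1 := by
  constructor
  · intro h
    exact h _ (hI.inf_mem hc) _ (hI.inf_mem hd)
  · intro h
    have hne : c ≠ d := by rintro rfl; omega
    rcases hI.ord c hc d hd hne with h1 | h1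
    · exact h1
    · have := h1 _ (hI.inf_mem hd) _ (hI.inf_mem hc)
      omega

lemma Inv.inj (hI : Inv Γ M k S) {c d : Clu} (hc : c ∈ S) (hd : d ∈ S)
    (h : sInf c.1 = sInf d.1) : c = d := by
  by_contra hne
  rcases hI.ord c hc d hd hne with h1 | h1
  · rw [hI.lt_iff hc hd] at h1; omega
  · rw [hI.lt_iff hd hc] at h1; omega

lemma cluDist_comm (C D : Set ℕ) : cluDist C D = cluDist D C := by
  unfold cluDist
  congr 1
  ext d
  constructor
  · rintro ⟨a, ha, b, hb, h⟩
    exact ⟨b, hb, a, ha, by rw [h, Nat.dist_comm]⟩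
  · rintro ⟨a, ha, b, hb, h⟩
    exact ⟨b, hb, a, ha, by rw [h, Nat.dist_comm]⟩

lemma adj_symm {B : Set Clu} {t : ℕ} {p q : Clu} (h : adjStep B t p q) : adjStep B t q p := by
  obtain ⟨h1, h2, h3, h4⟩ := h
  exact ⟨h2, h1, by rwa [cluDist_comm], h4.symm⟩

lemma rtg_symm {B : Set Clu} {t : ℕ} {p q : Clu} (h : Relation.ReflTransGen (adjStep B t) p q) :
    Relation.ReflTransGen (adjStep B t) q p := by
  induction h with
  | refl => exact .refl
  | tail _ h2 ih => exact .head (adj_symm h2) ih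

lemma runOf_eq {B : Set Clu} {t : ℕ} {p q : Clu} (h : Relation.ReflTransGen (adjStep B t) p q) :
    runOf B t p = runOf B t q := by
  ext r
  exact ⟨fun hr => ⟨hr.1, (rtg_symm h).trans hr.2⟩, fun hr => ⟨hr.1, h.trans hr.2⟩⟩

lemma Inv.cross (hI : Inv Γ M k S) {B : Set Clu} (hB : B ⊆ S) {t : ℕ} {p q c : Clu}
    (hc : c ∈ B) (h : Relation.ReflTransGen (adjStep B t) p q)
    (h1 : sInf p.1 ≤ sInf c.1) (h2 : sInf c.1 < sInf q.1) :
    (∃ v, adjStep B t c v ∧ sInf c.1 < sInf v.1) ∧ Relation.ReflTransGen (adjStep B t) p c := by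
  induction h with
  | refl => omega
  | @tail b q hpb hbq ih =>
    rcases Nat.lt_or_ge (sInf c.1) (sInf b.1) with h3 | h3
    · exact ih h3
    · obtain ⟨hb, hq, hd, hadj⟩ := hbq
      rcases h3.eq_or_lt with h4 | h4
      · have : b = c := hI.inj (hB hb) (hB hc) h4
        subst this
        exact ⟨⟨q, ⟨hb, hq, hd, hadj⟩, h2⟩, hpb⟩
      · exfalso
        rcases hadj with ⟨_, h5⟩ | ⟨h5, _⟩
        · exact h5 c hc ⟨(hI.lt_iff (hB hb) (hB hc)).2 h4, (hI.lt_iff (hB hc) (hB hq)).2 h2⟩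
        · rw [hI.lt_iff (hB hq) (hB hb)] at h5
          omega

lemma Inv.chain (hI : Inv Γ M k S) {B : Set Clu} (hB : B ⊆ S) (hBm : ∀ c ∈ B, k + 1 ≤ c.2)
    (t : ℕ) : ∀ (n : ℕ) (T : Finset Clu), T.card = n + 1 → (T : Set Clu) ⊆ B →
    (∀ c ∈ T, ∀ d ∈ T, sInf c.1 < sInf d.1 →
      ∃ v ∈ T, sInf c.1 < sInf v.1 ∧ cluDist c.1 v.1 < t) →
    ∃ F m, Spans F (⋃ q ∈ T, q.1) ∧ Ch t k (Wit M k) m F ∧ m + k * n = ∑ c ∈ T, c.2 ∧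
      k + 1 + n ≤ m := by
  classical
  intro n
  induction n with
  | zero =>
    intro T hT hTB _
    obtain ⟨c, rfl⟩ := Finset.card_eq_one.1 hT
    have hc : c ∈ B := hTB (by simp)
    obtain ⟨F, hF, hW⟩ := hI.wit c (hB hc)
    refine ⟨F, c.2, by simpa using hF, .single _ _ hW, by simp, by simpa using hBm c hc⟩
  | succ n ih =>
    intro T hT hTB hlink
    obtain ⟨c, hcT, hmin⟩ := Finset.exists_min_image T (fun c => sInf c.1)
      (Finset.card_pos.1 (by omega))
    have hcB : c ∈ B := hTB hcT
    have hlt : ∀ d ∈ T.erase c, sInf c.1 < sInf d.1 := by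
      intro d hd
      rw [Finset.mem_erase] at hd
      refine lt_of_le_of_ne (hmin d hd.2) fun h => hd.1 ?_
      exact (hI.inj (hB hcB) (hB (hTB hd.2)) h).symm
    have hcard : (T.erase c).card = n + 1 := by rw [Finset.card_erase_of_mem hcT]; omega
    obtain ⟨F2, m2, hF2, hCh, hm2, hm2'⟩ := ih (T.erase c) hcard
      (fun d hd => hTB (Finset.mem_of_mem_erase hd)) (by
        intro d hd e he hde
        obtain ⟨v, hv, hv1, hv2⟩ := hlink d (Finset.mem_of_mem_erase hd) e
          (Finset.mem_of_mem_erase he) hde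
        refine ⟨v, ?_, hv1, hv2⟩
        rw [Finset.mem_erase]
        refine ⟨?_, hv⟩
        rintro rfl
        have := hlt d hd
        omega)
    obtain ⟨F1, hF1, hW1⟩ := hI.wit c (hB hcB)
    have hsum := Finset.add_sum_erase T (fun c => c.2) hcT
    have hcm := hBm c hcB
    have hmm : ∀ d ∈ T.erase c, ∀ x ∈ c.1, ∀ y ∈ d.1, x < y := by
      intro d hd
      exact (hI.lt_iff (hB hcB) (hB (hTB (Finset.mem_of_mem_erase hd)))).2 (hlt d hd)
    have hF12 : ∀ x ∈ F1, ∀ y ∈ F2, x < y := by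
      intro x hx y hy
      have h2 := hF2.1 hy
      rw [Set.mem_iUnion₂] at h2
      obtain ⟨d, hd, hyd⟩ := h2
      exact hmm d hd x (hF1.1 hx) y hyd
    have hU : (⋃ q ∈ T, q.1) = c.1 ∪ ⋃ q ∈ T.erase c, q.1 := by
      conv_lhs => rw [← Finset.insert_erase hcT]
      rw [Finset.set_biUnion_insert]
    refine ⟨F1 ∪ F2, c.2 + m2 - k, ?_, ?_, ?_, by omega⟩
    · rw [hU]
      constructor
      · rw [Finset.coe_union]
        exact Set.union_subset_union hF1.1 hF2.1
      · intro y hy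
        rcases hy with hy | hy
        · obtain ⟨⟨a, ha, ha'⟩, b, hb, hb'⟩ := hF1.2 y hy
          exact ⟨⟨a, by simp [ha], ha'⟩, b, by simp [hb], hb'⟩
        · obtain ⟨⟨a, ha, ha'⟩, b, hb, hb'⟩ := hF2.2 y hy
          exact ⟨⟨a, by simp [ha], ha'⟩, b, by simp [hb], hb'⟩
    · refine .cons _ c.2 m2 F1 F2 hcm (by omega) (by omega) hW1 hCh hF12 ?_
      obtain ⟨d, hd⟩ : (T.erase c).Nonempty := Finset.card_pos.1 (by omega)
      obtain ⟨v, hv, hv1, hv2⟩ := hlink c hcT d (Finset.mem_of_mem_erase hd) (hlt d hd)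
      have hvE : v ∈ T.erase c := by
        rw [Finset.mem_erase]
        refine ⟨?_, hv⟩
        rintro rfl
        omega
      have hne : {d | ∃ a ∈ c.1, ∃ b ∈ v.1, d = Nat.dist a b}.Nonempty :=
        ⟨_, _, hI.inf_mem (hB hcB), _, hI.inf_mem (hB (hTB hv)), rfl⟩
      obtain ⟨a, ha, b, hb, hab⟩ := Nat.sInf_mem hne
      have hab' : Nat.dist a b < t := by rw [← hab]; exact hv2
      have hlt' := hmm v hvE a ha b hb
      rw [Nat.dist_eq_sub_of_le hlt'.le] at hab'
      obtain ⟨x, hx, hx'⟩ := (hF1.2 a ha).2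
      obtain ⟨y, hy, hy'⟩ := (hF2.2 b (Set.mem_iUnion₂.2 ⟨v, hvE, hb⟩)).1
      exact ⟨x, hx, y, hy, by omega⟩
    · rw [← hsum, ← hm2, mul_add]
      have : k ≤ m2 := by omega
      omega

lemma Inv.link (hI : Inv Γ M k S) {B : Set Clu} (hB : B ⊆ S) {t : ℕ} {p c e : Clu}
    (hc : c ∈ runOf B t p) (he : e ∈ runOf B t p) (hce : sInf c.1 < sInf e.1) :
    ∃ v ∈ runOf B t p, sInf c.1 < sInf v.1 ∧ sInf v.1 ≤ sInf e.1 ∧ cluDist c.1 v.1 < t := by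
  obtain ⟨⟨v, hv, hlt⟩, -⟩ := hI.cross hB hc.1 ((rtg_symm hc.2).trans he.2) le_rfl hce
  refine ⟨v, ⟨hv.2.1, hc.2.tail hv⟩, hlt, ?_, hv.2.2.1⟩
  by_contra hcon
  rw [not_le] at hcon
  obtain ⟨h1, h2, -, ⟨-, h3⟩ | ⟨h3, -⟩⟩ := hv
  · exact h3 e he.1 ⟨(hI.lt_iff (hB h1) (hB he.1)).2 hce, (hI.lt_iff (hB he.1) (hB h2)).2 hcon⟩
  · rw [hI.lt_iff (hB h2) (hB h1)] at h3
    omega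

lemma Inv.run_finite (hG : GoodG M Γ) (hI : Inv Γ M k S) {B : Set Clu} (hB : B ⊆ S)
    (hBm : ∀ c ∈ B, k + 1 ≤ c.2) {p : Clu} (hp : p ∈ B) :
    (runOf B (M ^ (k + 1)) p).Finite := by
  classical
  by_contra hinf
  set R := runOf B (M ^ (k + 1)) p with hR
  have hpR : p ∈ R := ⟨hp, .refl⟩
  obtain ⟨N, hN⟩ := hG (sInf p.1)
  obtain ⟨U, hU, hUc⟩ := Set.Infinite.exists_subset_card_eq hinf (N + 1)
  obtain ⟨d, hd, hmax⟩ := Finset.exists_max_image (insert p U) (fun c => sInf c.1) (by simp)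
  have hdR : d ∈ R := by
    rw [Finset.mem_insert] at hd
    rcases hd with rfl | hd
    · exact hpR
    · exact hU hd
  have hTf : {c ∈ R | sInf c.1 ≤ sInf d.1}.Finite := by
    refine Set.Finite.of_finite_image (f := fun c : Clu => sInf c.1) ?_ ?_
    · refine (Set.finite_Iic (sInf d.1)).subset ?_
      rintro _ ⟨c, hc, rfl⟩
      exact hc.2
    · intro c hc e he h
      exact hI.inj (hB hc.1.1) (hB he.1.1) h
  set T := hTf.toFinset with hT
  have hTm : ∀ c, c ∈ T ↔ c ∈ R ∧ sInf c.1 ≤ sInf d.1 := by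
    intro c; rw [hT, Set.Finite.mem_toFinset]; rfl
  have hpT : p ∈ T := (hTm p).2 ⟨hpR, hmax p (by simp)⟩
  have hUT : U ⊆ T := fun c hc => (hTm c).2 ⟨hU hc, hmax c (by simp [hc])⟩
  have hcard := Finset.card_le_card hUT
  obtain ⟨F, m, hF, hCh, -, hm⟩ := hI.chain hB hBm (M ^ (k + 1)) (T.card - 1) T (by omega)
    (fun c hc => ((hTm c).1 hc).1.1) (by
      intro c hc e he hce
      obtain ⟨v, hv, h1, h2, h3⟩ := hI.link hB ((hTm c).1 hc).1 ((hTm e).1 he).1 hce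
      exact ⟨v, (hTm v).2 ⟨hv, h2.trans ((hTm e).1 he).2⟩, h1, h3⟩)
  have hpU : sInf p.1 ∈ ⋃ q ∈ T, q.1 := Set.mem_iUnion₂.2 ⟨p, hpT, hI.inf_mem (hB hp)⟩
  refine hN m (by omega) (k + 1) F hCh ?_ (hF.2 _ hpU).1 (hF.2 _ hpU).2
  refine hF.1.trans (Set.iUnion₂_subset fun c hc => hI.sub c (hB ((hTm c).1 hc).1.1))

lemma spans_span {F : Finset ℕ} (hF : F.Nonempty) {U : Set ℕ} (h : Spans F U) (hU : U ⊆ Γ) :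
    Spans F (spanI U ∩ Γ) ∧ sInf U ∈ U ∧ sSup U ∈ U := by
  obtain ⟨x, hx⟩ := hF
  have hne : U.Nonempty := ⟨x, h.1 hx⟩
  have hbdd : BddAbove U := by
    refine ⟨F.sup id, fun y hy => ?_⟩
    obtain ⟨b, hb, hyb⟩ := (h.2 y hy).2
    exact hyb.trans (Finset.le_sup (f := id) hb)
  have h1 : sInf U ∈ U := Nat.sInf_mem hne
  have h2 : sSup U ∈ U := Nat.sSup_mem hne hbdd
  refine ⟨⟨?_, ?_⟩, h1, h2⟩
  · intro y hy
    exact ⟨⟨Nat.sInf_le (h.1 hy), le_csSup hbdd (h.1 hy)⟩, hU (h.1 hy)⟩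
  · rintro y ⟨⟨hy1, hy2⟩, -⟩
    obtain ⟨a, ha, ha'⟩ := (h.2 _ h1).1
    obtain ⟨b, hb, hb'⟩ := (h.2 _ h2).2
    exact ⟨⟨a, ha, ha'.trans hy1⟩, b, hb, hy2.trans hb'⟩

lemma Inv.run_wit (hG : GoodG M Γ) (hI : Inv Γ M k S) {R : Set Clu}
    (hR : IsRun {q ∈ S | k + 1 ≤ q.2} (M ^ (k + 1)) R) :
    (∃ F, Spans F (runClu Γ k R).1 ∧ Wit M (k + 1) (runClu Γ k R).2 F) ∧
      k + 2 ≤ (runClu Γ k R).2 ∧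
      sInf (⋃ q ∈ R, q.1) ∈ (⋃ q ∈ R, q.1) ∧ sSup (⋃ q ∈ R, q.1) ∈ (⋃ q ∈ R, q.1) := by
  classical
  obtain ⟨p, hp, hRp, q, hq, hqp⟩ := hR
  have hB : {q ∈ S | k + 1 ≤ q.2} ⊆ S := fun q hq => hq.1
  have hBm : ∀ c ∈ {q ∈ S | k + 1 ≤ q.2}, k + 1 ≤ c.2 := fun c hc => hc.2
  have hfin : R.Finite := by rw [hRp]; exact hI.run_finite hG hB hBm hp
  have hpR : p ∈ R := by rw [hRp]; exact ⟨hp, .refl⟩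
  have hcard : 1 < hfin.toFinset.card :=
    Finset.one_lt_card.2 ⟨q, by simpa using hq, p, by simpa using hpR, hqp⟩
  have hRB : ∀ c ∈ R, c ∈ {q ∈ S | k + 1 ≤ q.2} := by
    intro c hc; rw [hRp] at hc; exact hc.1
  obtain ⟨F, m, hF, hCh, hm1, hm2⟩ := hI.chain hB hBm (M ^ (k + 1)) (hfin.toFinset.card - 1)
    hfin.toFinset (by omega) (fun c hc => hRB c (by simpa using hc)) (by
      intro c hc e he hce
      rw [Set.Finite.mem_toFinset] at hc he
      rw [hRp] at hc he
      obtain ⟨v, hv, h1, h2, h3⟩ := hI.link hB hc he hce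
      refine ⟨v, ?_, h1, h3⟩
      rw [Set.Finite.mem_toFinset, hRp]
      exact hv)
  have hmass : (runClu Γ k R).2 = m := by
    simp only [runClu]
    rw [finsum_mem_eq_finite_toFinset_sum _ hfin, ← hm1, Nat.card_coe_set_eq,
      Set.ncard_eq_toFinset_card R hfin]
    omega
  have hUeq : (⋃ q ∈ hfin.toFinset, q.1) = ⋃ q ∈ R, q.1 := by simp
  rw [hUeq] at hF
  have hUΓ : (⋃ q ∈ R, q.1) ⊆ Γ := Set.iUnion₂_subset fun c hc => hI.sub c (hRB c hc).1
  have hW : Wit M (k + 1) m F := hCh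
  obtain ⟨h1, h2, h3⟩ := spans_span hW.nonempty hF hUΓ
  refine ⟨⟨F, h1, by rw [hmass]; exact hW⟩, by omega, h2, h3⟩

lemma Inv.runs_lt (hI : Inv Γ M k S) {B : Set Clu} (hB : B ⊆ S) {t : ℕ} {p p' : Clu}
    (hp' : p' ∈ B) (hne : runOf B t p ≠ runOf B t p') (hlt : sInf p.1 < sInf p'.1) :
    ∀ u ∈ runOf B t p, ∀ v ∈ runOf B t p', cluLT u.1 v.1 := by
  have h1 : ∀ u ∈ runOf B t p, sInf u.1 < sInf p'.1 := by
    intro u hu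
    by_contra hcon
    rw [not_lt] at hcon
    rcases hcon.eq_or_lt with h | h
    · have := hI.inj (hB hp') (hB hu.1) h
      subst this
      exact hne (runOf_eq hu.2)
    · exact hne (runOf_eq (hI.cross hB hp' hu.2 hlt.le h).2)
  intro u hu v hv
  rw [hI.lt_iff (hB hu.1) (hB hv.1)]
  by_contra hcon
  rw [not_lt] at hcon
  have h2 := (hI.cross hB hu.1 (rtg_symm hv.2) hcon (h1 u hu)).2
  exact hne (runOf_eq (hu.2.trans (rtg_symm (hv.2.trans h2))))

lemma Inv.run_run (hG : GoodG M Γ) (hI : Inv Γ M k S) {R R' : Set Clu}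
    (hR : IsRun {q ∈ S | k + 1 ≤ q.2} (M ^ (k + 1)) R)
    (hR' : IsRun {q ∈ S | k + 1 ≤ q.2} (M ^ (k + 1)) R') (hne : R ≠ R') :
    cluLT (runClu Γ k R).1 (runClu Γ k R').1 ∨ cluLT (runClu Γ k R').1 (runClu Γ k R).1 := by
  have hB : {q ∈ S | k + 1 ≤ q.2} ⊆ S := fun q hq => hq.1
  have main : ∀ R R' : Set Clu, IsRun {q ∈ S | k + 1 ≤ q.2} (M ^ (k + 1)) R →
      IsRun {q ∈ S | k + 1 ≤ q.2} (M ^ (k + 1)) R' →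
      (∀ u ∈ R, ∀ v ∈ R', cluLT u.1 v.1) → cluLT (runClu Γ k R).1 (runClu Γ k R').1 := by
    intro R R' hR hR' h
    obtain ⟨-, -, -, h1⟩ := hI.run_wit hG hR
    obtain ⟨-, -, h2, -⟩ := hI.run_wit hG hR'
    obtain ⟨u, hu, hu'⟩ := Set.mem_iUnion₂.1 h1
    obtain ⟨v, hv, hv'⟩ := Set.mem_iUnion₂.1 h2
    have h3 := h u hu v hv _ hu' _ hv'
    rintro a ⟨⟨-, ha⟩, -⟩ b ⟨⟨hb, -⟩, -⟩
    omega
  obtain ⟨p, hp, hRp, -⟩ := id hR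
  obtain ⟨p', hp', hRp', -⟩ := id hR'
  rcases lt_trichotomy (sInf p.1) (sInf p'.1) with h | h | h
  · left
    apply main R R' hR hR'
    intro u hu v hv
    rw [hRp] at hu
    rw [hRp'] at hv
    exact hI.runs_lt hB hp' (by rw [← hRp, ← hRp']; exact hne) h u hu v hv
  · exact absurd (by rw [hRp, hRp', hI.inj (hB hp) (hB hp') h]) hne
  · right
    apply main R' R hR' hR
    intro u hu v hv
    rw [hRp'] at hu
    rw [hRp] at hv
    exact hI.runs_lt hB hp (by rw [← hRp, ← hRp']; exact hne.symm) h u hu v hv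

lemma Inv.run_old (hG : GoodG M Γ) (hI : Inv Γ M k S) {R : Set Clu}
    (hR : IsRun {q ∈ S | k + 1 ≤ q.2} (M ^ (k + 1)) R) {c : Clu} (hc : c ∈ S)
    (hd : Disjoint c.1 (spanI (⋃ q ∈ R, q.1))) :
    cluLT (runClu Γ k R).1 c.1 ∨ cluLT c.1 (runClu Γ k R).1 := by
  obtain ⟨-, -, h1, h2⟩ := hI.run_wit hG hR
  have hRS : ∀ u ∈ R, u ∈ S := by
    obtain ⟨p, hp, hRp, -⟩ := hR
    intro u hu
    rw [hRp] at hu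
    exact hu.1.1
  set U := ⋃ q ∈ R, q.1 with hU
  have hle : sInf U ≤ sSup U := Nat.sInf_le h2
  have m1 : sInf U ∈ spanI U := ⟨le_rfl, hle⟩
  have m2 : sSup U ∈ spanI U := ⟨hle, le_rfl⟩
  obtain ⟨u, hu, hu'⟩ := Set.mem_iUnion₂.1 h1
  obtain ⟨v, hv, hv'⟩ := Set.mem_iUnion₂.1 h2
  have hcu : c ≠ u := by rintro rfl; exact Set.disjoint_left.1 hd hu' m1
  have hcv : c ≠ v := by rintro rfl; exact Set.disjoint_left.1 hd hv' m2
  rcases hI.ord c hc u (hRS u hu) hcu with h | h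
  · right
    rintro a ha b ⟨⟨hb, -⟩, -⟩
    exact lt_of_lt_of_le (h a ha _ hu') hb
  · rcases hI.ord c hc v (hRS v hv) hcv with h' | h'
    · exfalso
      have hx := hI.inf_mem hc
      exact Set.disjoint_left.1 hd hx ⟨(h _ hu' _ hx).le, (h' _ hx _ hv').le⟩
    · left
      rintro b ⟨⟨-, hb⟩, -⟩ a ha
      exact lt_of_le_of_lt hb (h' _ hv' a ha)

lemma Inv.next (hG : GoodG M Γ) (hI : Inv Γ M k S) : Inv Γ M (k + 1) (nextPart Γ M k S) := by
  refine ⟨?_, ?_, ?_⟩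
  · rintro c (⟨R, hR, rfl⟩ | ⟨hc, -⟩)
    · exact Set.inter_subset_right
    · exact hI.sub c hc
  · rintro c (⟨R, hR, rfl⟩ | ⟨hc, -⟩)
    · exact (hI.run_wit hG hR).1
    · obtain ⟨F, hF, hW⟩ := hI.wit c hc
      exact ⟨F, hF, hW.succ⟩
  · rintro c (⟨R, hR, rfl⟩ | ⟨hc, hc'⟩) d (⟨R', hR', rfl⟩ | ⟨hd, hd'⟩) hne
    · exact hI.run_run hG hR hR' (by rintro rfl; exact hne rfl)
    · exact hI.run_old hG hR hd (hd' R hR)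
    · exact (hI.run_old hG hR' hc (hc' R' hR')).symm
    · exact hI.ord c hc d hd hne

lemma inv_parts (hG : GoodG M Γ) : ∀ k, Inv Γ M k (parts Γ M k) := by
  intro k
  induction k with
  | zero =>
    refine ⟨?_, ?_, ?_⟩
    · rintro c ⟨x, hx, rfl⟩
      simpa using hx
    · rintro c ⟨x, hx, rfl⟩
      exact ⟨{x}, ⟨by simp, by simp⟩, rfl, x, rfl⟩
    · rintro c ⟨x, hx, rfl⟩ d ⟨y, hy, rfl⟩ hne
      have : x ≠ y := by rintro rfl; exact hne rfl
      rcases lt_or_gt_of_ne this with h | h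
      · left; simpa [cluLT] using h
      · right; simpa [cluLT] using h
  | succ k ih => exact ih.next hG

lemma good_kappa (hG : GoodG M Γ) (x : ℕ) : KappaFinite Γ M x := by
  obtain ⟨N, hN⟩ := hG x
  refine ⟨N, ?_⟩
  rintro l ⟨c, ⟨hc, hc'⟩, hx⟩
  by_contra hcon
  rw [not_le] at hcon
  obtain ⟨j, rfl⟩ : ∃ j, l = j + 1 := ⟨l - 1, by omega⟩
  have hI := inv_parts hG j
  rcases hc with ⟨R, hR, rfl⟩ | ⟨hc, -⟩
  · obtain ⟨⟨F, hF, hW⟩, hm, -⟩ := hI.run_wit hG hR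
    exact hN _ (by omega) _ F hW (hF.1.trans Set.inter_subset_right) (hF.2 x hx).1 (hF.2 x hx).2
  · exact hc' j (by omega) hc

end det

/-! ### Probabilistic part -/

lemma measure_subset_le {p : ℝ} {μ : Measure (ℕ → Bool)} (hμ : IsBernoulliProduct μ p)
    (F : Finset ℕ) : μ {ξ | (F : Set ℕ) ⊆ Gamma ξ} ≤ ENNReal.ofReal p ^ F.card := by
  by_cases h0 : 0 ∈ F
  · have : {ξ : ℕ → Bool | (F : Set ℕ) ⊆ Gamma ξ} = ∅ := by
      ext ξ
      simp only [Set.mem_setOf_eq, Set.mem_empty_iff_false, iff_false]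
      intro h
      have := (h h0).1
      omega
    rw [this]
    simp
  · have hinj : Set.InjOn (fun n : ℕ => n - 1) (F : Set ℕ) := by
      intro a ha b hb hab
      have h1 : a ≠ 0 := by rintro rfl; exact h0 ha
      have h2 : b ≠ 0 := by rintro rfl; exact h0 hb
      simp only at hab
      omega
    have h := hμ.2 (F.image (fun n => n - 1)) (fun _ => true)
    simp only [if_true, Finset.prod_const, Finset.card_image_of_injOn hinj] at h
    rw [← h]
    refine measure_mono fun ξ hξ => ?_
    intro i hi
    rw [Finset.mem_image] at hi
    obtain ⟨n, hn, rfl⟩ := hi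
    exact (hξ hn).2

/-- The bad event. -/
def badE (M x m : ℕ) : Set (ℕ → Bool) :=
  {ξ | ∃ F, Wit M m m F ∧ (F : Set ℕ) ⊆ Gamma ξ ∧ (∃ a ∈ F, a ≤ x) ∧ ∃ b ∈ F, x ≤ b}

lemma badE_le (M : ℕ) (hM : 3 ≤ M) {p : ℝ} {μ : Measure (ℕ → Bool)}
    (hμ : IsBernoulliProduct μ p)
    (hq : ENNReal.ofReal p ≤ ((1 / (64 * M ^ 2) : ℝ≥0) : ℝ≥0∞)) (x m : ℕ) :
    μ (badE M x m) ≤ ((2 * (1 / 8) ^ m : ℝ≥0) : ℝ≥0∞) := by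
  have hsub : badE M x m ⊆ ⋃ d ∈ Finset.range (M ^ m + 1),
      ⋃ F : {F : Finset ℕ | Wit M m m F ∧ IsLeast (F : Set ℕ) (x - d)},
        {ξ | (F.1 : Set ℕ) ⊆ Gamma ξ} := by
    rintro ξ ⟨F, hW, hF, ⟨a, ha, hax⟩, b, hb, hxb⟩
    have hne := hW.nonempty
    have h1 := F.min'_le a ha
    have h2 := hW.diam hM _ (F.min'_mem hne) b hb
    rw [Set.mem_iUnion₂]
    refine ⟨x - F.min' hne, by rw [Finset.mem_range]; omega, ?_⟩
    rw [Set.mem_iUnion]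
    have h3 : x - (x - F.min' hne) = F.min' hne := by omega
    exact ⟨⟨F, hW, by rw [h3]; exact F.isLeast_min' hne⟩, hF⟩
  calc μ (badE M x m) ≤ _ := measure_mono hsub
    _ ≤ ∑ d ∈ Finset.range (M ^ m + 1), μ (⋃ F : {F : Finset ℕ | Wit M m m F ∧
          IsLeast (F : Set ℕ) (x - d)}, {ξ | (F.1 : Set ℕ) ⊆ Gamma ξ}) :=
        measure_biUnion_finset_le _ _
    _ ≤ ∑ d ∈ Finset.range (M ^ m + 1), ((AA M m m : ℝ≥0) : ℝ≥0∞) := by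
        refine Finset.sum_le_sum fun d _ => ?_
        refine (measure_iUnion_le _).trans ?_
        refine le_trans ?_ (wt_Wit M hM (ENNReal.ofReal p) hq m m (x - d))
        exact ENNReal.tsum_le_tsum fun F => measure_subset_le hμ F.1
    _ = (((M ^ m + 1 : ℕ) * AA M m m : ℝ≥0) : ℝ≥0∞) := by
        rw [Finset.sum_const, Finset.card_range, nsmul_eq_mul]
        push_cast
        rfl
    _ ≤ _ := by
        apply ENNReal.coe_le_coe.2
        have hM1 : (1 : ℝ≥0) ≤ M := by exact_mod_cast (by omega : 1 ≤ M)
        have hM0 : (M : ℝ≥0) ≠ 0 := by positivity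
        have e1 : (M : ℝ≥0) ^ m + 1 ≤ 2 * M ^ m := by
          rw [two_mul]
          gcongr
          exact one_le_pow₀ hM1
        have e2 : 1 / (4 * (M : ℝ≥0)) ≤ 1 := by
          rw [div_le_one (by positivity)]
          calc (1 : ℝ≥0) ≤ 4 * 1 := by norm_num
            _ ≤ 4 * M := by gcongr
        unfold AA
        push_cast
        calc ((M : ℝ≥0) ^ m + 1) * (1 / (4 * M) * (rr m / M) ^ m)
            ≤ (2 * M ^ m) * (1 * ((1 / 8) / M) ^ m) := by
              gcongr
              exact rr_le' m
          _ = 2 * (1 / 8) ^ m := by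
              rw [div_pow (1 / 8 : ℝ≥0)]
              field_simp

theorem statement_12 (M : ℕ) (hM : 3 ≤ M) (p : ℝ) (hp : 0 < p)
    (hpM : (M : ℝ) < (64 * p) ^ (-(1 / 2) : ℝ))
    (μ : Measure (ℕ → Bool)) (hμ : IsBernoulliProduct μ p) :
    μ {ξ | ∀ x ∈ Gamma ξ, KappaFinite (Gamma ξ) M x} = 1 := by
  have := hμ.1
  have hM0 : (0 : ℝ) < M := by positivity
  have hpb : p ≤ 1 / (64 * M ^ 2) := by
    have h64 : (0 : ℝ) < 64 * p := by positivity
    have h1 : (M : ℝ) ^ 2 < ((64 * p) ^ (-(1 / 2) : ℝ)) ^ 2 := by gcongr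
    rw [← Real.rpow_natCast, ← Real.rpow_natCast, ← Real.rpow_mul h64.le] at h1
    norm_num at h1
    rw [Real.rpow_neg_one, lt_inv_comm₀ (by positivity) (by positivity)] at h1
    rw [le_div_iff₀ (by positivity)]
    rw [lt_inv_comm₀ (by positivity) (by positivity), ← one_div, lt_div_iff₀ (by positivity)] at h1
    nlinarith
  have hq : ENNReal.ofReal p ≤ ((1 / (64 * M ^ 2) : ℝ≥0) : ℝ≥0∞) := by
    rw [← ENNReal.ofReal_coe_nnreal]
    apply ENNReal.ofReal_le_ofReal
    push_cast
    exact hpb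
  have hbc : ∀ x, ∀ᵐ ξ ∂μ, ∀ᶠ m in atTop, ξ ∉ badE M x m := by
    intro x
    apply ae_eventually_notMem
    refine ne_top_of_le_ne_top ?_ (ENNReal.tsum_le_tsum fun m => badE_le M hM hμ hq x m)
    rw [ENNReal.tsum_coe_ne_top_iff_summable]
    refine Summable.mul_left _ ?_
    apply NNReal.summable_geometric
    rw [div_lt_one (by norm_num)]
    norm_num
  have hae : ∀ᵐ ξ ∂μ, ∀ x ∈ Gamma ξ, KappaFinite (Gamma ξ) M x := by
    filter_upwards [ae_all_iff.2 hbc] with ξ hξ x _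
    refine good_kappa ?_ x
    intro y
    obtain ⟨N, hN⟩ := eventually_atTop.1 (hξ y)
    refine ⟨N, fun m hm k F hW hF ha hb => hN m hm ⟨F, hW.diag, hF, ha, hb⟩⟩
  rw [measure_congr (eventuallyEq_univ.2 hae)]
  exact measure_univ

end Paper
end
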